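/- For every odd r ≥ 3 there exists an r-regular 3-partite 3-graph H with n vertices in each vertex class (for some n) such that ν(H) ≤ (1 + 1/r)·n/2. (Such an H exists with n = r and ν(H) ≤ (r − 1)/2 + 1.) -/

import Mathlib

namespace Tripartite

/-- The degree of a vertex `a` in the first class of a 3-partite 3-multihypergraph,
whose edges are given as a multiset of triples (so parallel edges are allowed). -/
def deg1 {α β γ : Type*} [DecidableEq α] (H : Multiset (α × β × γ)) (a : α) : ℕ :=
  (H.filter fun e => e.1 = a).card

/-- The degree of a vertex `b` in the second class. -/
def deg2 {α β γ : Type*} [DecidableEq β] (H : Multiset (α × β × γ)) (b : β) : ℕ :=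
  (H.filter fun e => e.2.1 = b).card

/-- The degree of a vertex `c` in the third class. -/
def deg3 {α β γ : Type*} [DecidableEq γ] (H : Multiset (α × β × γ)) (c : γ) : ℕ :=
  (H.filter fun e => e.2.2 = c).card

/-- `H` is `r`-regular: every vertex of every class has degree exactly `r`. -/
def IsRegular {α β γ : Type*} [DecidableEq α] [DecidableEq β] [DecidableEq γ]
    (H : Multiset (α × β × γ)) (r : ℕ) : Prop :=
  (∀ a, deg1 H a = r) ∧ (∀ b, deg2 H b = r) ∧ (∀ c, deg3 H c = r)

/-- A matching of `H`: a set of edges of `H` that are pairwise disjoint. -/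
def IsMatching {α β γ : Type*} (H : Multiset (α × β × γ)) (M : Finset (α × β × γ)) : Prop :=
  (∀ e ∈ M, e ∈ H) ∧
  ∀ e ∈ M, ∀ f ∈ M, e ≠ f → e.1 ≠ f.1 ∧ e.2.1 ≠ f.2.1 ∧ e.2.2 ≠ f.2.2

/-- The matching number ν(H): the maximum size of a matching of `H`. -/
noncomputable def matchNum {α β γ : Type*} (H : Multiset (α × β × γ)) : ℕ :=
  sSup {k | ∃ M : Finset (α × β × γ), IsMatching H M ∧ M.card = k}

/-!
Write `r = 2k + 1` and take `k` vertex-disjoint truncated Fano planes, each on the two vertices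
`u, v` of every class: the edge `uuu` with multiplicity `k + 1` and `uvv`, `vuv`, `vvu` with
multiplicity `k`. Then `u` has degree `r`, while `v` falls short by one. One further vertex `w` in
each class absorbs the missing edges `vww`, `wvw`, `wwv`, and adding the edge `www` gives `w`
degree `2k + 1` as well. The edges of one truncated Fano plane pairwise meet, and so do the edges
containing `w`, since each of them contains `w` in at least two classes. Hence the edges split into
`k + 1` intersecting families, and a matching takes at most one edge from each.
-/

section MultisetSum

variable {α β ι : Type*}

theorem map_finset_sum (f : α → β) (s : Finset ι) (H : ι → Multiset α) :
    (∑ i ∈ s, H i).map f = ∑ i ∈ s, (H i).map f :=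
  map_sum (Multiset.mapAddMonoidHom f) H s

theorem map_finset_val_eq_sum_singleton (s : Finset ι) (f : ι → α) :
    s.val.map f = ∑ i ∈ s, {f i} := by
  simp only [← Finset.sum_multiset_singleton s, map_finset_sum, Multiset.map_singleton]

end MultisetSum

section MatchingNumber

variable {α β γ ι : Type*} {H K : Multiset (α × β × γ)} {M N : Finset (α × β × γ)}

theorem IsMatching.mono (hM : IsMatching H M) (hNM : N ⊆ M) (hNK : ∀ e ∈ N, e ∈ K) :
    IsMatching K N :=
  ⟨hNK, fun e he f hf ↦ hM.2 e (hNM he) f (hNM hf)⟩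

theorem IsMatching.card_le_matchNum (hM : IsMatching H M) : M.card ≤ matchNum H := by
  classical
  refine le_csSup ⟨H.toFinset.card, ?_⟩ ⟨M, hM, rfl⟩
  rintro _ ⟨N, hN, rfl⟩
  exact Finset.card_le_card fun e he ↦ Multiset.mem_toFinset.2 (hN.1 e he)

theorem matchNum_le {n : ℕ} (h : ∀ M, IsMatching H M → M.card ≤ n) : matchNum H ≤ n := by
  refine csSup_le' ?_
  rintro _ ⟨M, hM, rfl⟩
  exact h M hM

theorem matchNum_zero : matchNum (0 : Multiset (α × β × γ)) = 0 :=
  Nat.le_zero.1 <| matchNum_le fun M hM ↦ by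
    simp [Finset.eq_empty_of_forall_notMem fun e he ↦ Multiset.notMem_zero e (hM.1 e he)]

theorem matchNum_add_le (H K : Multiset (α × β × γ)) :
    matchNum (H + K) ≤ matchNum H + matchNum K := by
  classical
  refine matchNum_le fun M hM ↦ ?_
  have hH : IsMatching H {e ∈ M | e ∈ H} :=
    hM.mono (Finset.filter_subset _ _) fun e he ↦ (Finset.mem_filter.1 he).2
  have hK : IsMatching K {e ∈ M | e ∉ H} := by
    refine hM.mono (Finset.filter_subset _ _) fun e he ↦ ?_
    obtain ⟨heM, heH⟩ := Finset.mem_filter.1 he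
    exact (Multiset.mem_add.1 (hM.1 e heM)).resolve_left heH
  calc M.card = {e ∈ M | e ∈ H}.card + {e ∈ M | e ∉ H}.card :=
        (Finset.card_filter_add_card_filter_not _).symm
    _ ≤ matchNum H + matchNum K := add_le_add hH.card_le_matchNum hK.card_le_matchNum

theorem matchNum_sum_le (s : Finset ι) (H : ι → Multiset (α × β × γ)) :
    matchNum (∑ i ∈ s, H i) ≤ ∑ i ∈ s, matchNum (H i) :=
  Finset.le_sum_of_subadditive matchNum matchNum_zero.le matchNum_add_le s H

/-- An intersecting family: any two edges share a vertex. These are the hypergraphs of matching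
number at most one. -/
def IsIntersecting (H : Multiset (α × β × γ)) : Prop :=
  ∀ e ∈ H, ∀ f ∈ H, e.1 = f.1 ∨ e.2.1 = f.2.1 ∨ e.2.2 = f.2.2

theorem IsIntersecting.matchNum_le_one (hH : IsIntersecting H) : matchNum H ≤ 1 := by
  refine matchNum_le fun M hM ↦ Finset.card_le_one.2 fun e he f hf ↦ ?_
  by_contra hef
  obtain ⟨h₁, h₂, h₃⟩ := hM.2 e he f hf hef
  rcases hH e (hM.1 e he) f (hM.1 f hf) with h | h | h
  exacts [h₁ h, h₂ h, h₃ h]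

theorem matchNum_sum_le_card {s : Finset ι} {H : ι → Multiset (α × β × γ)}
    (hH : ∀ i ∈ s, IsIntersecting (H i)) : matchNum (∑ i ∈ s, H i) ≤ s.card :=
  calc matchNum (∑ i ∈ s, H i) ≤ ∑ i ∈ s, matchNum (H i) := matchNum_sum_le s H
    _ ≤ s.card • 1 := Finset.sum_le_card_nsmul s _ 1 fun i hi ↦ (hH i hi).matchNum_le_one
    _ = s.card := Nat.mul_one _

end MatchingNumber

section Rotation

variable {α β γ : Type*}

/-- The cyclic shift of the three vertex classes, used to read the degrees in the second and third
classes as degrees in the first. -/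
def rotate (e : α × β × γ) : β × γ × α :=
  (e.2.1, e.2.2, e.1)

theorem deg1_eq_count [DecidableEq α] (H : Multiset (α × β × γ)) (a : α) :
    deg1 H a = (H.map Prod.fst).count a := by
  simp only [deg1, Multiset.count_map, eq_comm]

theorem deg1_map_rotate [DecidableEq β] (H : Multiset (α × β × γ)) (b : β) :
    deg1 (H.map rotate) b = deg2 H b := by
  rw [deg1, Multiset.filter_map, Multiset.card_map]
  rfl

theorem deg2_map_rotate [DecidableEq γ] (H : Multiset (α × β × γ)) (c : γ) :
    deg2 (H.map rotate) c = deg3 H c := by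
  rw [deg2, Multiset.filter_map, Multiset.card_map]
  rfl

theorem isRegular_of_map_rotate_eq [DecidableEq α] {H : Multiset (α × α × α)} {r : ℕ}
    (hH : H.map rotate = H) (hr : ∀ a, deg1 H a = r) : IsRegular H r := by
  have h₂ (a : α) : deg2 H a = r := by rw [← deg1_map_rotate, hH, hr]
  have h₃ (a : α) : deg3 H a = r := by rw [← deg2_map_rotate, hH, h₂]
  exact ⟨hr, h₂, h₃⟩

end Rotation

section TruncatedFano

variable {α : Type*}

/-- The truncated Fano plane with vertices `u, v` in each class, weighted so that `u` has odd degree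
`2 * m + 1` and `v` has degree `2 * m`. -/
def truncatedFano (m : ℕ) (u v : α) : Multiset (α × α × α) :=
  (m + 1) • {(u, u, u)} + m • {(u, v, v)} + m • {(v, u, v)} + m • {(v, v, u)}

theorem isIntersecting_truncatedFano (m : ℕ) (u v : α) :
    IsIntersecting (truncatedFano m u v) := by
  have mem_cases {e : α × α × α} (he : e ∈ truncatedFano m u v) :
      e = (u, u, u) ∨ e = (u, v, v) ∨ e = (v, u, v) ∨ e = (v, v, u) := by
    simp only [truncatedFano, Multiset.mem_add] at he
    rcases he with ((he | he) | he) | he <;>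
      simp [Multiset.mem_singleton.1 (Multiset.mem_of_mem_nsmul he)]
  intro e he f hf
  rcases mem_cases he with rfl | rfl | rfl | rfl <;>
    rcases mem_cases hf with rfl | rfl | rfl | rfl <;> simp

theorem map_rotate_truncatedFano (m : ℕ) (u v : α) :
    (truncatedFano m u v).map rotate = truncatedFano m u v := by
  simp only [truncatedFano, rotate, Multiset.map_add, Multiset.map_nsmul, Multiset.map_singleton]
  abel

theorem map_fst_truncatedFano (m : ℕ) (u v : α) :
    (truncatedFano m u v).map Prod.fst = (2 * m + 1) • {u} + (2 * m) • {v} := by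
  simp only [truncatedFano, Multiset.map_add, Multiset.map_nsmul, Multiset.map_singleton]
  module

end TruncatedFano

section DoubleStar

variable {α : Type*}

/-- The star whose edges contain the centre `w` in at least two of the three classes, the remaining
vertex running over `w` and the leaves `s`. It raises the degree of each leaf by one in every
class. -/
def doubleStar (w : α) (s : Multiset α) : Multiset (α × α × α) :=
  {(w, w, w)} + s.map (fun v ↦ (v, w, w)) + s.map (fun v ↦ (w, v, w)) + s.map (fun v ↦ (w, w, v))

theorem isIntersecting_doubleStar (w : α) (s : Multiset α) :
    IsIntersecting (doubleStar w s) := by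
  have centre_twice {e : α × α × α} (he : e ∈ doubleStar w s) :
      e.1 = w ∧ e.2.1 = w ∨ e.1 = w ∧ e.2.2 = w ∨ e.2.1 = w ∧ e.2.2 = w := by
    simp only [doubleStar, Multiset.mem_add, Multiset.mem_singleton, Multiset.mem_map] at he
    rcases he with ((rfl | ⟨v, -, rfl⟩) | ⟨v, -, rfl⟩) | ⟨v, -, rfl⟩ <;> simp
  intro e he f hf
  have he_centre := centre_twice he
  have hf_centre := centre_twice hf
  grind

theorem map_rotate_doubleStar (w : α) (s : Multiset α) :
    (doubleStar w s).map rotate = doubleStar w s := by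
  simp only [doubleStar, rotate, Multiset.map_add, Multiset.map_singleton, Multiset.map_map,
    Function.comp_def]
  abel

theorem map_fst_doubleStar (w : α) (s : Multiset α) :
    (doubleStar w s).map Prod.fst = (2 * s.card + 1) • {w} + s := by
  simp only [doubleStar, Multiset.map_add, Multiset.map_singleton, Multiset.map_map,
    Function.comp_def, Multiset.map_id', Multiset.map_const', ← Multiset.nsmul_singleton]
  module

end DoubleStar

section LinkedFano

variable {ι V : Type*} [Fintype ι]

/-- The extremal hypergraph: one truncated Fano plane for each `j : ι`, on the vertices
`x (some (j, false))` and `x (some (j, true))`, together with a double star centred at `x none` that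
repairs the degrees of the vertices `x (some (j, true))`. The same labelling `x` names the vertices
of all three classes. -/
def linkedFano (x : Option (ι × Bool) → V) : Multiset (V × V × V) :=
  doubleStar (x none) (Finset.univ.val.map fun j ↦ x (some (j, true))) +
    ∑ j, truncatedFano (Fintype.card ι) (x (some (j, false))) (x (some (j, true)))

theorem matchNum_linkedFano_le (x : Option (ι × Bool) → V) :
    matchNum (linkedFano x) ≤ Fintype.card ι + 1 := by
  have hstar := (isIntersecting_doubleStar (x none)
    (Finset.univ.val.map fun j ↦ x (some (j, true)))).matchNum_le_one
  have hfano := matchNum_sum_le_card (s := Finset.univ) fun (j : ι) _ ↦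
    isIntersecting_truncatedFano (Fintype.card ι) (x (some (j, false))) (x (some (j, true)))
  calc matchNum (linkedFano x) ≤ 1 + Fintype.card ι :=
        (matchNum_add_le _ _).trans (add_le_add hstar hfano)
    _ = Fintype.card ι + 1 := add_comm _ _

theorem map_rotate_linkedFano (x : Option (ι × Bool) → V) :
    (linkedFano x).map rotate = linkedFano x := by
  simp only [linkedFano, Multiset.map_add, map_finset_sum, map_rotate_doubleStar,
    map_rotate_truncatedFano]

theorem map_fst_linkedFano (x : Option (ι × Bool) → V) :
    (linkedFano x).map Prod.fst = (2 * Fintype.card ι + 1) • Finset.univ.val.map x := by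
  simp only [linkedFano, Multiset.map_add, map_finset_sum, map_fst_doubleStar,
    map_fst_truncatedFano, Multiset.card_map, Finset.card_val, Finset.card_univ]
  simp only [map_finset_val_eq_sum_singleton, Fintype.sum_option, Fintype.sum_prod_type,
    Fintype.sum_bool, Finset.sum_add_distrib, ← Finset.smul_sum]
  module

theorem isRegular_linkedFano [DecidableEq V] {x : Option (ι × Bool) → V}
    (hx : Function.Bijective x) : IsRegular (linkedFano x) (2 * Fintype.card ι + 1) := by
  refine isRegular_of_map_rotate_eq (map_rotate_linkedFano x) fun a ↦ ?_
  obtain ⟨p, rfl⟩ := hx.surjective a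
  classical
  rw [deg1_eq_count, map_fst_linkedFano, Multiset.count_nsmul,
    Multiset.count_map_eq_count' _ _ hx.injective,
    Multiset.count_eq_one_of_mem Finset.univ.nodup (Finset.mem_univ p), mul_one]

end LinkedFano

/-- For every odd `r ≥ 3` there is an `r`-regular 3-partite 3-graph `H` with `n` vertices
in each class (namely `n = r`) with `ν(H) ≤ (r − 1)/2 + 1`, so that
`ν(H) ≤ (1 + 1/r)·n/2`. -/
theorem stmt11 (r : ℕ) (hr : 3 ≤ r) (hro : Odd r) :
    ∃ (n : ℕ) (H : Multiset (Fin n × Fin n × Fin n)),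
      n = r ∧
      IsRegular H r ∧
      matchNum H ≤ (r - 1) / 2 + 1 ∧
      (matchNum H : ℝ) ≤ (1 + 1 / (r : ℝ)) * n / 2 := by
  obtain ⟨k, rfl⟩ := hro
  let x : Option (Fin k × Bool) ≃ Fin (2 * k + 1) :=
    Fintype.equivFinOfCardEq (by simp [mul_comm])
  have hreg : IsRegular (linkedFano x) (2 * k + 1) := by
    simpa only [Fintype.card_fin] using isRegular_linkedFano x.bijective
  have hν : matchNum (linkedFano x) ≤ k + 1 := by
    simpa only [Fintype.card_fin] using matchNum_linkedFano_le x
  refine ⟨2 * k + 1, linkedFano x, rfl, hreg, by omega, ?_⟩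
  calc (matchNum (linkedFano x) : ℝ) ≤ k + 1 := by exact_mod_cast hν
    _ = (1 + 1 / ((2 * k + 1 : ℕ) : ℝ)) * (2 * k + 1 : ℕ) / 2 := by
      push_cast
      field_simp
      ring

end Tripartite
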